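/- Fix an integer K ≥ 1 and 0 < η ≤ 1/2. Consider the additive Gaussian model Y = X + σZ with η = σ²/2 and cumulative distribution functions F, G of X, Y. Assume F and G are (2K+2)-times continuously differentiable with all derivatives up to order 2K+2 uniformly bounded by L on ℝ, and fix y ∈ ℝ with q(y) = G^{(1)}(y) > 0. Let h₁,…,h_K be determined by the recursion Σ_{l=0}^{k−1} (−1)^l (k!/((k−l)! l!)) Σ_{j=1}^{k−l} G^{(2l+j)} · B_{k−l,j}(h₁,…,h_{k−l−j+1}) + (−1)^k G^{(2k)} = 0 (k = 1,…,K), and define the K-th order denoiser T_K(y) = y + Σ_{k=1}^K (η^k/k!) h_k(y). Then there exists a constant C, depending only on L, K, and q(y), such that |F(T_K(y)) − G(y)| ≤ C · η^{K+1}. -/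

import Mathlib

open MeasureTheory ProbabilityTheory Filter

/-- The partial Bell polynomial `B_{n,j}(x₁, …, x_{n−j+1})`. -/
noncomputable def bellPartial (n j : ℕ) (x : ℕ → ℝ) : ℝ :=
  ∑ i ∈ Finset.filter
      (fun i : Fin (n - j + 1) → ℕ =>
        (∑ m, i m) = j ∧ (∑ m, (m.1 + 1) * i m) = n)
      (Fintype.piFinset fun _ => Finset.range (n + 1)),
    (n.factorial : ℝ) / (∏ m, ((i m).factorial : ℝ)) *
      ∏ m, (x (m.1 + 1) / ((m.1 + 1).factorial : ℝ)) ^ i m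

/-!
The Gaussian smoothing semigroup is `exp (η D²)`, so formally `F = exp (-η D²) G`. Replacing `G` by
its Taylor polynomial at `y` and substituting the increment `δ = ∑ k, η ^ k h_k / k!`, whose powers
generate the partial Bell polynomials, turns `F (y + δ) - G y` into a power series in `η` whose
coefficients of degree at most `K` are the left-hand sides of the recursion. Three errors remain,
each of order `η ^ (K + 1)`: truncating the inverse semigroup, controlled by expanding `G` around
`F` with exact Gaussian moments; the Taylor remainders; and the terms of the finite composition of
degree above `K`. They are uniform because dividing the recursion by `q(y)` bounds every `h_k`.
-/

open Asymptotics Finset Polynomial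
open scoped Nat

section IteratedDeriv

variable {𝕜 E : Type*} [NontriviallyNormedField 𝕜] [NormedAddCommGroup E] [NormedSpace 𝕜 E]

lemma iteratedDeriv_iteratedDeriv (a b : ℕ) (f : 𝕜 → E) :
    iteratedDeriv a (iteratedDeriv b f) = iteratedDeriv (b + a) f := by
  rw [iteratedDeriv_eq_iterate, iteratedDeriv_eq_iterate, iteratedDeriv_eq_iterate, add_comm,
    Function.iterate_add_apply]

lemma contDiff_iteratedDeriv {f : 𝕜 → E} (a b : ℕ) (hf : ContDiff 𝕜 (b + a : ℕ) f) :
    ContDiff 𝕜 a (iteratedDeriv b f) := by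
  rw [iteratedDeriv_eq_iterate]
  exact ContDiff.iterate_deriv' a b (by rwa [Nat.add_comm])

end IteratedDeriv

section Taylor

variable {f : ℝ → ℝ} {L : ℝ} {n : ℕ}

lemma taylorWithinEval_uIcc_eq_sum (hf : ContDiff ℝ n f) {x y : ℝ} (hxy : x ≠ y) :
    taylorWithinEval f n (Set.uIcc x y) x y =
      ∑ j ∈ range (n + 1), iteratedDeriv j f x * ((y - x) ^ j / j !) := by
  rw [taylor_within_apply]
  refine sum_congr rfl fun j hj => ?_
  have hjn : (j : WithTop ℕ∞) ≤ n := mod_cast mem_range_succ_iff.1 hj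
  rw [iteratedDerivWithin_eq_iteratedDeriv (uniqueDiffOn_uIcc hxy) (hf.of_le hjn).contDiffAt
    Set.left_mem_uIcc, smul_eq_mul]
  ring

lemma abs_sub_taylor_le (hf : ContDiff ℝ n f) (hL : ∀ x, |iteratedDeriv n f x| ≤ L) (x d : ℝ) :
    |f (x + d) - ∑ j ∈ range n, iteratedDeriv j f x * (d ^ j / j !)| ≤ L * |d| ^ n / n ! := by
  rcases n with _ | n
  · simpa using hL (x + d)
  rcases eq_or_ne d 0 with rfl | hd
  · simp [sum_range_succ']
  have hxd : x ≠ x + d := by simpa using hd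
  obtain ⟨ξ, -, hξ⟩ := taylor_mean_remainder_lagrange_iteratedDeriv hxd hf.contDiffOn
  rw [taylorWithinEval_uIcc_eq_sum (hf.of_le (by simp)) hxd, add_sub_cancel_left] at hξ
  rw [hξ, abs_div, abs_mul, abs_pow, Nat.abs_cast]
  gcongr
  exact hL ξ

end Taylor

section ExponentialSums

variable {R : Type*} [Field R] [CharZero R]

lemma sum_pow_div_factorial_mul_pow_div_factorial (a b : R) (n : ℕ) :
    ∑ l ∈ range (n + 1), a ^ l / l ! * (b ^ (n - l) / (n - l)!) = (a + b) ^ n / n ! := by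
  rw [add_pow, sum_div]
  refine sum_congr rfl fun l hl => ?_
  rw [Nat.cast_choose R (mem_range_succ_iff.1 hl)]
  field_simp [Nat.factorial_ne_zero]

lemma sum_neg_pow_mul_sum_pow_eq (t : R) (c : ℕ → R) (N : ℕ) :
    ∑ l ∈ range (N + 1), (-t) ^ l / l ! * ∑ m ∈ range (N + 1 - l), t ^ m / m ! * c (l + m) =
      c 0 := by
  simp only [mul_sum]
  rw [← sum_range_diag_flip (N + 1) fun l m => (-t) ^ l / l ! * (t ^ m / m ! * c (l + m))]
  have hdiag (k : ℕ) : ∑ l ∈ range (k + 1), (-t) ^ l / l ! * (t ^ (k - l) / (k - l)! *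
      c (l + (k - l))) = (-t + t) ^ k / k ! * c k := by
    rw [← sum_pow_div_factorial_mul_pow_div_factorial, sum_mul]
    refine sum_congr rfl fun l hl => ?_
    rw [Nat.add_sub_cancel' (mem_range_succ_iff.1 hl), mul_assoc]
  simp [hdiag, sum_range_succ']

end ExponentialSums

section GaussianMoments

lemma integrable_pow_gaussianReal (n : ℕ) :
    Integrable (fun z : ℝ => z ^ n) (gaussianReal 0 1) := by
  have h := (memLp_id_gaussianReal (μ := 0) (v := 1) n).integrable_norm_pow' (p := n)
  rw [← integrable_norm_iff (by fun_prop)]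
  simpa only [norm_pow, id] using h

lemma integral_odd_pow_gaussianReal (k : ℕ) : ∫ z, z ^ (2 * k + 1) ∂(gaussianReal 0 1) = 0 := by
  have h : ∫ z, z ^ (2 * k + 1) ∂(gaussianReal 0 1) =
      ∫ z, (-z) ^ (2 * k + 1) ∂(gaussianReal 0 1) := by
    conv_lhs => rw [← neg_zero, ← gaussianReal_map_neg]
    exact integral_map (by fun_prop) (by fun_prop)
  simp only [(odd_two_mul_add_one k).neg_pow, integral_neg] at h
  linarith

lemma integral_Ioi_even_pow_mul_exp (k : ℕ) :
    ∫ z in Set.Ioi (0 : ℝ), z ^ (2 * k) * Real.exp (-z ^ 2 / 2) =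
      √2 * √Real.pi / 2 * (2 * k - 1 : ℕ)‼ := by
  have h := integral_rpow_mul_exp_neg_mul_rpow (p := 2) (q := (2 * k : ℕ)) (b := 1 / 2)
    (by norm_num) (by linarith [(2 * k).cast_nonneg (α := ℝ)]) (by norm_num)
  have hexponent : (((2 * k : ℕ) : ℝ) + 1) / 2 = k + 1 / 2 := by push_cast; ring
  have hpow : (1 / 2 : ℝ) ^ (-(((2 * k : ℕ) : ℝ) + 1) / 2) = 2 ^ k * √2 := by
    rw [neg_div, hexponent, one_div, Real.inv_rpow zero_le_two, Real.rpow_neg zero_le_two, inv_inv,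
      Real.rpow_add zero_lt_two, Real.rpow_natCast, inv_eq_one_div, Real.sqrt_eq_rpow]
  rw [hpow, hexponent, Real.Gamma_nat_add_half] at h
  simp only [Real.rpow_natCast, Real.rpow_ofNat] at h
  calc _ = ∫ z in Set.Ioi (0 : ℝ), z ^ (2 * k) * Real.exp (-(1 / 2) * z ^ 2) := by
        simp only [neg_mul, one_div_mul_eq_div, neg_div]
    _ = _ := by rw [h]; field_simp

lemma integral_even_pow_gaussianReal (k : ℕ) :
    ∫ z, z ^ (2 * k) ∂(gaussianReal 0 1) = (2 * k - 1 : ℕ)‼ := by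
  have heven : ∫ z : ℝ, z ^ (2 * k) * Real.exp (-z ^ 2 / 2) =
      2 * ∫ z in Set.Ioi (0 : ℝ), z ^ (2 * k) * Real.exp (-z ^ 2 / 2) := by
    rw [← integral_comp_abs]
    simp only [(even_two_mul k).pow_abs, sq_abs]
  calc ∫ z, z ^ (2 * k) ∂(gaussianReal 0 1)
      = (√2 * √Real.pi)⁻¹ * ∫ z : ℝ, z ^ (2 * k) * Real.exp (-z ^ 2 / 2) := by
        rw [integral_gaussianReal_eq_integral_smul one_ne_zero, ← integral_const_mul]
        simp only [gaussianPDFReal, NNReal.coe_one, mul_one, sub_zero, smul_eq_mul,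
          Real.sqrt_mul zero_le_two, mul_assoc, mul_comm (_ ^ _)]
    _ = (2 * k - 1 : ℕ)‼ := by
        rw [heven, integral_Ioi_even_pow_mul_exp]
        have : √Real.pi ≠ 0 := by positivity
        field_simp

lemma factorial_two_mul_eq_doubleFactorial (k : ℕ) :
    (2 * k)! = 2 ^ k * k ! * (2 * k - 1)‼ := by
  rcases k with _ | k
  · simp
  · rw [← Nat.doubleFactorial_two_mul]
    exact Nat.factorial_eq_mul_doubleFactorial (2 * k + 1)

end GaussianMoments

section Smoothing

variable {α : Type*} [MeasurableSpace α] {μ : Measure α} [IsFiniteMeasure μ] {u : α → ℝ}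
  {F : ℝ → ℝ} {L : ℝ} {n : ℕ}

lemma integrable_comp_sub (hu : AEMeasurable u μ) (hF : Continuous F) (hL : ∀ x, |F x| ≤ L)
    (x : ℝ) : Integrable (fun a => F (x - u a)) μ :=
  .of_bound (hF.measurable.comp_aemeasurable (hu.const_sub x)).aestronglyMeasurable L
    (ae_of_all _ fun _ => hL _)

lemma hasDerivAt_integral_comp_sub (hu : AEMeasurable u μ) (hF : ContDiff ℝ 1 F)
    (hL : ∀ x, |F x| ≤ L) (hL' : ∀ x, |deriv F x| ≤ L) (x : ℝ) :
    HasDerivAt (fun x => ∫ a, F (x - u a) ∂μ) (∫ a, deriv F (x - u a) ∂μ) x :=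
  (hasDerivAt_integral_of_dominated_loc_of_deriv_le (bound := fun _ => L)
    (F' := fun x a => deriv F (x - u a)) univ_mem
    (.of_forall fun x => (integrable_comp_sub hu hF.continuous hL x).aestronglyMeasurable)
    (integrable_comp_sub hu hF.continuous hL x)
    (integrable_comp_sub hu (hF.continuous_deriv le_rfl) hL' x).aestronglyMeasurable
    (ae_of_all _ fun _ _ _ => hL' _) (integrable_const L)
    (ae_of_all _ fun a x _ =>
      ((hF.differentiable one_ne_zero (x - u a)).hasDerivAt).comp_sub_const x (u a))).2

lemma iteratedDeriv_integral_comp_sub (hu : AEMeasurable u μ) (hF : ContDiff ℝ n F)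
    (hL : ∀ k ≤ n, ∀ x, |iteratedDeriv k F x| ≤ L) {k : ℕ} (hk : k ≤ n) :
    iteratedDeriv k (fun x => ∫ a, F (x - u a) ∂μ) =
      fun x => ∫ a, iteratedDeriv k F (x - u a) ∂μ := by
  induction k with
  | zero => simp
  | succ k ih =>
    have hFk : ContDiff ℝ 1 (iteratedDeriv k F) :=
      contDiff_iteratedDeriv 1 k (hF.of_le (mod_cast hk))
    ext x
    rw [iteratedDeriv_succ, ih (by omega), (hasDerivAt_integral_comp_sub hu hFk (hL k (by omega))
      (by simpa only [iteratedDeriv_succ] using hL (k + 1) hk) x).deriv, iteratedDeriv_succ]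

lemma contDiff_integral_comp_sub (hu : AEMeasurable u μ) (hF : ContDiff ℝ n F)
    (hL : ∀ k ≤ n, ∀ x, |iteratedDeriv k F x| ≤ L) :
    ContDiff ℝ n (fun x => ∫ a, F (x - u a) ∂μ) := by
  refine contDiff_nat_iff_iteratedDeriv.2 ⟨fun k hk => ?_, fun k hk => ?_⟩
  · have hFk : Continuous (iteratedDeriv k F) := hF.continuous_iteratedDeriv k (mod_cast hk)
    rw [iteratedDeriv_integral_comp_sub hu hF hL hk]
    exact continuous_of_dominated (bound := fun _ => L)
      (fun x => (integrable_comp_sub hu hFk (hL k hk) x).aestronglyMeasurable)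
      (fun _ => ae_of_all _ fun _ => hL k hk _) (integrable_const L)
      (ae_of_all _ fun a => hFk.comp (continuous_sub_right (u a)))
  · have hFk : ContDiff ℝ 1 (iteratedDeriv k F) :=
      contDiff_iteratedDeriv 1 k (hF.of_le (mod_cast hk))
    rw [iteratedDeriv_integral_comp_sub hu hF hL hk.le]
    exact fun x => (hasDerivAt_integral_comp_sub hu hFk (hL k hk.le)
      (by simpa only [iteratedDeriv_succ] using hL (k + 1) hk) x).differentiableAt

end Smoothing

section GaussianSmoothing

/-- The convolution of `F` with the centred Gaussian law of variance `σ²`, written as an expectation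
over a standard Gaussian variable. It turns the distribution function of `X` into that of
`X + σZ`. -/
noncomputable def gaussianSmoothing (σ : ℝ) (F : ℝ → ℝ) (x : ℝ) : ℝ :=
  ∫ z, F (x - σ * z) ∂(gaussianReal 0 1)

lemma toReal_map_add_mul_Iic_eq_gaussianSmoothing {Ω : Type*} [MeasurableSpace Ω] {μ : Measure Ω}
    [IsProbabilityMeasure μ] {X Z : Ω → ℝ} (hX : Measurable X) (hZ : Measurable Z)
    (hlaw : μ.map Z = gaussianReal 0 1) (hXZ : IndepFun X Z μ) (σ x : ℝ) :
    (μ.map (fun ω => X ω + σ * Z ω) (Set.Iic x)).toReal =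
      gaussianSmoothing σ (fun x => (μ.map X (Set.Iic x)).toReal) x := by
  have : IsProbabilityMeasure (μ.map X) := Measure.isProbabilityMeasure_map hX.aemeasurable
  have hadd : Measurable (fun p : ℝ × ℝ => p.1 + σ * p.2) := by fun_prop
  have hprod := (indepFun_iff_map_prod_eq_prod_map_map hX.aemeasurable hZ.aemeasurable).1 hXZ
  have hslice (z : ℝ) : (fun u => (u, z)) ⁻¹' ((fun p : ℝ × ℝ => p.1 + σ * p.2) ⁻¹' Set.Iic x) =
      Set.Iic (x - σ * z) := by
    ext u
    simp [le_sub_iff_add_le]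
  rw [show (fun ω => X ω + σ * Z ω) = (fun p : ℝ × ℝ => p.1 + σ * p.2) ∘ fun ω => (X ω, Z ω) from
      rfl, ← Measure.map_map hadd (hX.prodMk hZ), hprod, hlaw, Measure.map_apply hadd
    measurableSet_Iic, Measure.prod_apply_symm (hadd measurableSet_Iic), ← integral_toReal
    (measurable_measure_prodMk_right (hadd measurableSet_Iic)).aemeasurable
    (ae_of_all _ fun _ => measure_lt_top _ _)]
  simp only [hslice, gaussianSmoothing]

variable {F : ℝ → ℝ} {L : ℝ} {n : ℕ} (σ : ℝ)

lemma abs_gaussianSmoothing_le (hL : ∀ x, |F x| ≤ L) (x : ℝ) : |gaussianSmoothing σ F x| ≤ L := by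
  simpa [gaussianSmoothing] using norm_integral_le_of_norm_le_const (μ := gaussianReal 0 1)
    (f := fun z => F (x - σ * z)) (ae_of_all _ fun z => hL (x - σ * z))

lemma contDiff_gaussianSmoothing (hF : ContDiff ℝ n F)
    (hL : ∀ k ≤ n, ∀ x, |iteratedDeriv k F x| ≤ L) : ContDiff ℝ n (gaussianSmoothing σ F) :=
  contDiff_integral_comp_sub (by fun_prop) hF hL

lemma iteratedDeriv_gaussianSmoothing (hF : ContDiff ℝ n F)
    (hL : ∀ k ≤ n, ∀ x, |iteratedDeriv k F x| ≤ L) {k : ℕ} (hk : k ≤ n) :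
    iteratedDeriv k (gaussianSmoothing σ F) = gaussianSmoothing σ (iteratedDeriv k F) :=
  iteratedDeriv_integral_comp_sub (by fun_prop) hF hL hk

lemma integrable_gaussian_monomial (c : ℝ) (j : ℕ) :
    Integrable (fun z => c * ((-(σ * z)) ^ j / j !)) (gaussianReal 0 1) := by
  simp only [← neg_mul, mul_pow]
  exact (((integrable_pow_gaussianReal j).const_mul _).div_const _).const_mul c

lemma integral_gaussian_monomial (c : ℝ) (j : ℕ) :
    ∫ z, c * ((-(σ * z)) ^ j / j !) ∂(gaussianReal 0 1) =
      c * ((-σ) ^ j / j !) * ∫ z, z ^ j ∂(gaussianReal 0 1) := by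
  rw [← integral_const_mul]
  congr 1 with z
  rw [← neg_mul, mul_pow]
  ring

lemma integral_gaussian_odd_monomial (c : ℝ) (k : ℕ) :
    ∫ z, c * ((-(σ * z)) ^ (2 * k + 1) / (2 * k + 1)!) ∂(gaussianReal 0 1) = 0 := by
  rw [integral_gaussian_monomial, integral_odd_pow_gaussianReal, mul_zero]

lemma integral_gaussian_even_monomial (c : ℝ) (k : ℕ) :
    ∫ z, c * ((-(σ * z)) ^ (2 * k) / (2 * k)!) ∂(gaussianReal 0 1) =
      c * ((σ ^ 2 / 2) ^ k / k !) := by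
  have : ((2 * k - 1 : ℕ)‼ : ℝ) ≠ 0 := mod_cast (Nat.doubleFactorial_pos _).ne'
  rw [integral_gaussian_monomial, integral_even_pow_gaussianReal,
    factorial_two_mul_eq_doubleFactorial, pow_mul, neg_sq, div_pow]
  push_cast
  field_simp

lemma integral_gaussian_taylor_polynomial (c : ℕ → ℝ) (p : ℕ) :
    ∫ z, ∑ j ∈ range (2 * p), c j * ((-(σ * z)) ^ j / j !) ∂(gaussianReal 0 1) =
      ∑ m ∈ range p, (σ ^ 2 / 2) ^ m / m ! * c (2 * m) := by
  rw [integral_finsetSum _ fun j _ => integrable_gaussian_monomial σ (c j) j]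
  induction p with
  | zero => simp
  | succ p ih =>
    rw [mul_add_one, sum_range_succ, sum_range_succ, sum_range_succ, ih,
      integral_gaussian_odd_monomial, integral_gaussian_even_monomial, add_zero, mul_comm (c _)]

lemma abs_gaussianSmoothing_sub_sum_le {p : ℕ} (hF : ContDiff ℝ (2 * p : ℕ) F)
    (hL : ∀ x, |iteratedDeriv (2 * p) F x| ≤ L) (x : ℝ) :
    |gaussianSmoothing σ F x - ∑ m ∈ range p, (σ ^ 2 / 2) ^ m / m ! * iteratedDeriv (2 * m) F x| ≤
      L * ((σ ^ 2 / 2) ^ p / p !) := by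
  set T : ℝ → ℝ := fun z => ∑ j ∈ range (2 * p), iteratedDeriv j F x * ((-(σ * z)) ^ j / j !)
  have hT : Integrable T (gaussianReal 0 1) :=
    integrable_finsetSum _ fun j _ => integrable_gaussian_monomial σ _ j
  have hbound (z : ℝ) : ‖F (x - σ * z) - T z‖ ≤ L * ((-(σ * z)) ^ (2 * p) / (2 * p)!) := by
    have h := abs_sub_taylor_le hF hL x (-(σ * z))
    rwa [← sub_eq_add_neg, (even_two_mul p).pow_abs, mul_div_assoc] at h
  have hmajorant := integrable_gaussian_monomial σ L (2 * p)
  have hF_meas : AEStronglyMeasurable (fun z => F (x - σ * z)) (gaussianReal 0 1) :=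
    (hF.continuous.comp (by fun_prop)).aestronglyMeasurable
  have hrem : Integrable (fun z => F (x - σ * z) - T z) (gaussianReal 0 1) :=
    hmajorant.mono' (hF_meas.sub hT.aestronglyMeasurable) (ae_of_all _ hbound)
  have hF_int : Integrable (fun z => F (x - σ * z)) (gaussianReal 0 1) :=
    (hrem.add hT).congr (ae_of_all _ fun z => sub_add_cancel _ _)
  rw [← integral_gaussian_taylor_polynomial σ (fun j => iteratedDeriv j F x), gaussianSmoothing,
    ← integral_sub hF_int hT, ← Real.norm_eq_abs, ← integral_gaussian_even_monomial]
  exact norm_integral_le_of_norm_le hmajorant (ae_of_all _ hbound)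

lemma abs_sub_sum_iteratedDeriv_gaussianSmoothing_le {N : ℕ} (hF : ContDiff ℝ (2 * (N + 1) : ℕ) F)
    (hL : ∀ k ≤ 2 * (N + 1), ∀ x, |iteratedDeriv k F x| ≤ L) (x : ℝ) :
    |F x - ∑ l ∈ range (N + 1),
        (-(σ ^ 2 / 2)) ^ l / l ! * iteratedDeriv (2 * l) (gaussianSmoothing σ F) x| ≤
      L * ((σ ^ 2) ^ (N + 1) / (N + 1)!) := by
  set t := σ ^ 2 / 2 with ht
  have ht₀ : 0 ≤ t := by positivity
  have hterm : ∀ l ∈ range (N + 1), |(-t) ^ l / l ! * (∑ m ∈ range (N + 1 - l),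
      t ^ m / m ! * iteratedDeriv (2 * (l + m)) F x -
        iteratedDeriv (2 * l) (gaussianSmoothing σ F) x)| ≤
      L * (t ^ l / l ! * (t ^ (N + 1 - l) / (N + 1 - l)!)) := by
    intro l hl
    have hl : l ≤ N := mem_range_succ_iff.1 hl
    have h := abs_gaussianSmoothing_sub_sum_le (F := iteratedDeriv (2 * l) F) (L := L) σ
      (p := N + 1 - l) (contDiff_iteratedDeriv _ _ (hF.of_le (by norm_cast; omega)))
      (fun x => by rw [iteratedDeriv_iteratedDeriv]; exact hL _ (by omega) x) x
    simp only [iteratedDeriv_iteratedDeriv, ← mul_add, ← ht] at h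
    rw [iteratedDeriv_gaussianSmoothing σ hF hL (by omega), abs_mul, abs_div, abs_pow, abs_neg,
      abs_of_nonneg ht₀, Nat.abs_cast, abs_sub_comm, mul_left_comm L]
    gcongr
  have hL₀ : 0 ≤ L := (abs_nonneg _).trans (hL 0 (Nat.zero_le _) x)
  have hinv := sum_neg_pow_mul_sum_pow_eq t (fun m => iteratedDeriv (2 * m) F x) N
  rw [mul_zero, iteratedDeriv_zero] at hinv
  rw [← hinv, ← sum_sub_distrib]
  simp only [← mul_sub]
  calc _ ≤ ∑ l ∈ range (N + 1), L * (t ^ l / l ! * (t ^ (N + 1 - l) / (N + 1 - l)!)) :=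
        (abs_sum_le_sum_abs _ _).trans (sum_le_sum hterm)
    _ ≤ ∑ l ∈ range (N + 2), L * (t ^ l / l ! * (t ^ (N + 1 - l) / (N + 1 - l)!)) :=
        sum_le_sum_of_subset_of_nonneg (range_subset_range.2 (Nat.le_succ _))
          fun l _ _ => by positivity
    _ = L * ((σ ^ 2) ^ (N + 1) / (N + 1)!) := by
        rw [← mul_sum, sum_pow_div_factorial_mul_pow_div_factorial, ht, add_halves]

end GaussianSmoothing

section FormalExpansion

lemma pow_add_dvd_pow_sub_pow {R : Type*} [CommRing R] {x a b : R} {N : ℕ} (ha : x ∣ a)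
    (hb : x ∣ b) (hab : x ^ (N + 1) ∣ a - b) (j : ℕ) : x ^ (N + j) ∣ a ^ j - b ^ j := by
  induction j with
  | zero => simp
  | succ j ih =>
    have h₁ : x ^ (N + (j + 1)) ∣ a * (a ^ j - b ^ j) := by
      rw [← add_assoc, pow_succ']
      exact mul_dvd_mul ha ih
    have h₂ : x ^ (N + (j + 1)) ∣ b ^ j * (a - b) := by
      rw [add_left_comm, pow_add]
      exact mul_dvd_mul (pow_dvd_pow_of_dvd hb j) hab
    convert dvd_add h₁ h₂ using 1
    ring

/-- The exponential generating polynomial `∑_{m=1}^N h_m X^m / m!` of the increments `h`. Its value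
at `η` is `T_N(y) - y`, and its powers generate the partial Bell polynomials. -/
noncomputable def truncatedEGF (N : ℕ) (h : ℕ → ℝ) : ℝ[X] :=
  ∑ m ∈ Icc 1 N, C (h m / m !) * X ^ m

lemma eval_truncatedEGF (N : ℕ) (h : ℕ → ℝ) (t : ℝ) :
    (truncatedEGF N h).eval t = ∑ m ∈ Icc 1 N, t ^ m / m ! * h m := by
  simp only [truncatedEGF, eval_finsetSum, eval_mul, eval_C, eval_X_pow]
  exact sum_congr rfl fun m _ => by ring

lemma coeff_truncatedEGF (N : ℕ) (h : ℕ → ℝ) (n : ℕ) :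
    (truncatedEGF N h).coeff n = if n ∈ Icc 1 N then h n / n ! else 0 := by
  simp only [truncatedEGF, finsetSum_coeff, coeff_C_mul_X_pow, sum_ite_eq]

lemma natDegree_truncatedEGF_le (N : ℕ) (h : ℕ → ℝ) : (truncatedEGF N h).natDegree ≤ N := by
  refine natDegree_le_iff_coeff_eq_zero.2 fun n hn => ?_
  rw [coeff_truncatedEGF, if_neg (by simp; omega)]

lemma X_dvd_truncatedEGF (N : ℕ) (h : ℕ → ℝ) : X ∣ truncatedEGF N h := by
  rw [X_dvd_iff, coeff_truncatedEGF, if_neg (by simp)]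

lemma X_pow_dvd_truncatedEGF_sub (M N : ℕ) (h : ℕ → ℝ) :
    X ^ (min M N + 1) ∣ truncatedEGF M h - truncatedEGF N h := by
  refine X_pow_dvd_iff.2 fun d hd => ?_
  have hmem : d ∈ Icc 1 M ↔ d ∈ Icc 1 N := by simp only [mem_Icc]; omega
  simp only [coeff_sub, coeff_truncatedEGF, hmem, sub_self]

lemma bellPartial_filter_eq (n j : ℕ) :
    (Fintype.piFinset fun _ : Fin (n - j + 1) => range (n + 1)).filter
        (fun i => (∑ m, i m) = j ∧ (∑ m, (m.1 + 1) * i m) = n) =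
      (piAntidiag univ j).filter (fun i => (∑ m, (m.1 + 1) * i m) = n) := by
  ext i
  simp only [mem_filter, Fintype.mem_piFinset, mem_range, mem_piAntidiag, mem_univ, implies_true,
    and_true, and_iff_right_iff_imp]
  rintro ⟨-, hn⟩ a
  have := single_le_sum (f := fun m : Fin (n - j + 1) => (m.1 + 1) * i m) (by simp) (mem_univ a)
  nlinarith [Nat.zero_le (a.1 * i a)]

lemma coeff_prod_monomial_pow {R ι : Type*} [CommSemiring R] (s : Finset ι) (c : ι → R)
    (w i : ι → ℕ) (n : ℕ) :
    (∏ m ∈ s, (C (c m) * X ^ w m) ^ i m).coeff n =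
      if (∑ m ∈ s, w m * i m) = n then ∏ m ∈ s, c m ^ i m else 0 := by
  simp_rw [mul_pow, prod_mul_distrib, ← pow_mul, prod_pow_eq_pow_sum, ← C_pow, ← map_prod]
  rw [coeff_C_mul_X_pow]
  simp only [eq_comm]

lemma coeff_truncatedEGF_sub_add_one_pow (n j : ℕ) (h : ℕ → ℝ) :
    (truncatedEGF (n - j + 1) h ^ j).coeff n = j ! / n ! * bellPartial n j h := by
  have hP : truncatedEGF (n - j + 1) h =
      ∑ m : Fin (n - j + 1), C (h (m.1 + 1) / (m.1 + 1)!) * X ^ (m.1 + 1) := by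
    rw [truncatedEGF, ← sum_range fun m => C (h (m + 1) / (m + 1)!) * X ^ (m + 1),
      range_eq_Ico, sum_Ico_add' (fun m => C (h m / m !) * X ^ m)]
    rfl
  rw [hP, sum_pow_eq_sum_piAntidiag, finsetSum_coeff, bellPartial, bellPartial_filter_eq,
    sum_filter, mul_sum]
  refine sum_congr rfl fun i hi => ?_
  have hmultinomial : (Nat.multinomial univ i : ℝ) = j ! / ∏ m, ((i m)! : ℝ) := by
    have hspec := Nat.multinomial_spec univ i
    rw [(mem_piAntidiag.1 hi).1] at hspec
    rw [eq_div_iff (by positivity), mul_comm]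
    exact_mod_cast hspec
  rw [← C_eq_natCast, coeff_C_mul, coeff_prod_monomial_pow, hmultinomial]
  split_ifs
  · field_simp
  · simp

lemma coeff_truncatedEGF_pow {n N : ℕ} (hn : n ≤ N) (j : ℕ) (h : ℕ → ℝ) :
    (truncatedEGF N h ^ j).coeff n = j ! / n ! * bellPartial n j h := by
  rw [← coeff_truncatedEGF_sub_add_one_pow, ← sub_eq_zero, ← coeff_sub]
  rcases eq_or_ne j 0 with rfl | hj
  · simp
  · exact X_pow_dvd_iff.1 (pow_add_dvd_pow_sub_pow (X_dvd_truncatedEGF _ h)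
      (X_dvd_truncatedEGF _ h) (X_pow_dvd_truncatedEGF_sub _ _ h) j) n (by omega)

lemma bellPartial_eq_zero_of_lt {n j : ℕ} (hnj : n < j) (h : ℕ → ℝ) : bellPartial n j h = 0 := by
  have hcoeff := coeff_truncatedEGF_pow le_rfl j h (n := n)
  rw [X_pow_dvd_iff.1 (pow_dvd_pow_of_dvd (X_dvd_truncatedEGF n h) j) n hnj] at hcoeff
  exact (mul_eq_zero.1 hcoeff.symm).resolve_left (by positivity)

lemma bellPartial_zero_right (n : ℕ) (h : ℕ → ℝ) : bellPartial n 0 h = if n = 0 then 1 else 0 := by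
  have hcoeff := coeff_truncatedEGF_pow le_rfl 0 h (n := n)
  rw [pow_zero, coeff_one] at hcoeff
  rcases eq_or_ne n 0 with rfl | hn
  · simpa using hcoeff.symm
  · simpa [hn, Nat.factorial_ne_zero] using hcoeff

lemma bellPartial_one_right {n : ℕ} (hn : 1 ≤ n) (h : ℕ → ℝ) : bellPartial n 1 h = h n := by
  have hcoeff := coeff_truncatedEGF_pow le_rfl 1 h (n := n)
  rw [pow_one, coeff_truncatedEGF, if_pos (by simp [hn])] at hcoeff
  field_simp at hcoeff
  simpa using hcoeff.symm

/-- `k!` times the coefficient of `t ^ k` in the formal expansion of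
`∑ l, (-t) ^ l / l! * ∑ j, g (2l + j) * δ(t) ^ j / j!` along `δ(t) = ∑ m ≥ 1, h m * t ^ m / m!`. For
`k ≥ 1` its vanishing is the `k`-th recursion equation. -/
noncomputable def expansionCoeff (g h : ℕ → ℝ) (k : ℕ) : ℝ :=
  ∑ l ∈ range (k + 1), (-1) ^ l * (k.choose l : ℝ) *
    ∑ j ∈ range (k - l + 1), g (2 * l + j) * bellPartial (k - l) j h

lemma expansionCoeff_zero (g h : ℕ → ℝ) : expansionCoeff g h 0 = g 0 := by
  simp [expansionCoeff, bellPartial_zero_right]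

lemma expansionCoeff_eq (g h : ℕ → ℝ) (k : ℕ) :
    expansionCoeff g h k = (∑ l ∈ range k, (-1) ^ l * (k.choose l : ℝ) *
        ∑ j ∈ Icc 1 (k - l), g (2 * l + j) * bellPartial (k - l) j h) +
      (-1) ^ k * g (2 * k) := by
  rw [expansionCoeff, sum_range_succ]
  congr 1
  · refine sum_congr rfl fun l hl => ?_
    have hkl : k - l ≠ 0 := by have := mem_range.1 hl; omega
    rw [range_eq_Ico, sum_eq_sum_Ico_succ_bot (by omega), bellPartial_zero_right, if_neg hkl,
      mul_zero, zero_add]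
    rfl
  · simp [bellPartial_zero_right]

lemma expansionCoeff_eq_add {k : ℕ} (hk : 1 ≤ k) (g h : ℕ → ℝ) :
    expansionCoeff g h k = g 1 * h k +
      (∑ j ∈ Icc 2 k, g j * bellPartial k j h +
        ∑ l ∈ Ico 1 k, (-1) ^ l * (k.choose l : ℝ) *
          ∑ j ∈ Icc 1 (k - l), g (2 * l + j) * bellPartial (k - l) j h +
        (-1) ^ k * g (2 * k)) := by
  rw [expansionCoeff_eq, range_eq_Ico, sum_eq_sum_Ico_succ_bot hk, Nat.sub_zero,
    ← add_sum_Ioc_eq_sum_Icc hk, bellPartial_one_right hk]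
  simp only [pow_zero, Nat.choose_zero_right, Nat.cast_one, mul_zero, zero_add, one_mul]
  rw [show Ioc 1 k = Icc 2 k from rfl]
  ring

lemma sum_pow_mul_expansionCoeff (K : ℕ) (g h : ℕ → ℝ) (t : ℝ) :
    ∑ k ∈ range (K + 1), t ^ k / k ! * expansionCoeff g h k =
      ∑ l ∈ range (K + 1), ∑ j ∈ range (K + 1 - l), (-t) ^ l / l ! * (g (2 * l + j) / j !) *
        ∑ n ∈ range (K + 1 - l), (truncatedEGF K h ^ j).coeff n * t ^ n := by
  have hterm (k : ℕ) : t ^ k / k ! * expansionCoeff g h k =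
      ∑ l ∈ range (k + 1), (-t) ^ l / l ! * (t ^ (k - l) / (k - l)! *
        ∑ j ∈ range (k - l + 1), g (2 * l + j) * bellPartial (k - l) j h) := by
    rw [expansionCoeff, mul_sum]
    refine sum_congr rfl fun l hl => ?_
    have hlk : l ≤ k := mem_range_succ_iff.1 hl
    rw [Nat.cast_choose ℝ hlk, neg_pow t, ← pow_mul_pow_sub t hlk]
    field_simp
  simp only [hterm]
  rw [sum_range_diag_flip (K + 1) fun l n => (-t) ^ l / l ! * (t ^ n / n ! *
    ∑ j ∈ range (n + 1), g (2 * l + j) * bellPartial n j h)]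
  refine sum_congr rfl fun l _ => ?_
  simp only [mul_sum]
  rw [sum_comm (s := range (K + 1 - l))]
  refine sum_congr rfl fun n hn => ?_
  have hn : n < K + 1 - l := mem_range.1 hn
  have hcoeff (j : ℕ) : (truncatedEGF K h ^ j).coeff n = j ! / n ! * bellPartial n j h :=
    coeff_truncatedEGF_pow (by omega) j h
  simp only [hcoeff]
  rw [← sum_subset (range_subset_range.2 hn) fun j _ hj => by
    rw [bellPartial_eq_zero_of_lt (by simpa using hj)]; ring]
  exact sum_congr rfl fun j _ => by field_simp

lemma sum_pow_mul_expansionCoeff_of_eq_zero {K : ℕ} {g h : ℕ → ℝ}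
    (hexp : ∀ k ∈ Icc 1 K, expansionCoeff g h k = 0) (t : ℝ) :
    ∑ k ∈ range (K + 1), t ^ k / k ! * expansionCoeff g h k = g 0 := by
  have htail : ∑ k ∈ range K, t ^ (k + 1) / (k + 1)! * expansionCoeff g h (k + 1) = 0 :=
    sum_eq_zero fun k hk => by rw [hexp (k + 1) (by simpa using hk), mul_zero]
  rw [sum_range_succ', htail, expansionCoeff_zero]
  simp

end FormalExpansion

section Asymptotics

variable {ι : Type*} {l : Filter ι} {t : ι → ℝ} {g h : ι → ℕ → ℝ} {K : ℕ}

lemma isBigO_one_mul {u v : ι → ℝ} (hu : u =O[l] fun _ => (1 : ℝ))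
    (hv : v =O[l] fun _ => (1 : ℝ)) : (fun a => u a * v a) =O[l] fun _ => (1 : ℝ) := by
  simpa only [mul_one] using hu.mul hv

lemma isBigO_coeff_pow {P : ι → ℝ[X]} (hP : ∀ n, (fun a => (P a).coeff n) =O[l] fun _ => (1 : ℝ))
    (j n : ℕ) : (fun a => (P a ^ j).coeff n) =O[l] fun _ => (1 : ℝ) := by
  induction j generalizing n with
  | zero => simpa only [pow_zero] using isBigO_const_const _ one_ne_zero l
  | succ j ih =>
    simp only [pow_succ, coeff_mul]
    exact .fun_sum fun p _ => isBigO_one_mul (ih p.1) (hP p.2)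

lemma isBigO_eval_sub_sum_coeff {P : ι → ℝ[X]} {d : ℕ} (hd : ∀ a, (P a).natDegree ≤ d)
    (hP : ∀ n, (fun a => (P a).coeff n) =O[l] fun _ => (1 : ℝ))
    (ht : t =O[l] fun _ => (1 : ℝ)) (N : ℕ) :
    (fun a => (P a).eval (t a) - ∑ n ∈ range N, (P a).coeff n * t a ^ n) =O[l]
      fun a => t a ^ N := by
  have htail (a : ι) : (P a).eval (t a) - ∑ n ∈ range N, (P a).coeff n * t a ^ n =
      ∑ m ∈ range (d + 1), (P a).coeff (N + m) * t a ^ m * t a ^ N := by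
    have hlt : (P a).natDegree < N + (d + 1) := by have := hd a; omega
    rw [eval_eq_sum_range' hlt, sum_range_add, add_sub_cancel_left]
    exact sum_congr rfl fun m _ => by ring
  have hpow (m : ℕ) : (fun a => t a ^ m) =O[l] fun _ => (1 : ℝ) := by
    simpa only [one_pow] using ht.pow m
  simp only [htail]
  refine .fun_sum fun m _ => ?_
  simpa only [one_mul] using (isBigO_one_mul (hP (N + m)) (hpow m)).mul (isBigO_refl _ l)

lemma isBigO_coeff_truncatedEGF (hh : ∀ m ∈ Icc 1 K, (fun a => h a m) =O[l] fun _ => (1 : ℝ))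
    (n : ℕ) : (fun a => (truncatedEGF K (h a)).coeff n) =O[l] fun _ => (1 : ℝ) := by
  simp only [coeff_truncatedEGF]
  split_ifs with hn
  · simpa only [div_eq_inv_mul] using (hh n hn).const_mul_left _
  · exact isBigO_zero _ l

lemma isBigO_bellPartial {n j : ℕ}
    (hh : ∀ m ∈ Icc 1 (n - j + 1), (fun a => h a m) =O[l] fun _ => (1 : ℝ)) :
    (fun a => bellPartial n j (h a)) =O[l] fun _ => (1 : ℝ) := by
  have hbell (a : ι) : bellPartial n j (h a) =
      n ! / j ! * (truncatedEGF (n - j + 1) (h a) ^ j).coeff n := by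
    rw [coeff_truncatedEGF_sub_add_one_pow]
    field_simp
  simp only [hbell]
  exact (isBigO_coeff_pow (isBigO_coeff_truncatedEGF hh) j n).const_mul_left _

lemma isBigO_of_isBigO_expansionCoeff
    (hg : ∀ i ≤ 2 * K, (fun a => g a i) =O[l] fun _ => (1 : ℝ))
    (hg₁ : (fun _ => (1 : ℝ)) =O[l] fun a => g a 1)
    (hexp : ∀ k ∈ Icc 1 K, (fun a => expansionCoeff (g a) (h a) k) =O[l] fun _ => (1 : ℝ)) :
    ∀ k ∈ Icc 1 K, (fun a => h a k) =O[l] fun _ => (1 : ℝ) := by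
  intro k
  induction k using Nat.strong_induction_on with | _ k ih
  intro hk
  obtain ⟨hk₁, hkK⟩ := mem_Icc.1 hk
  have hbell {n j : ℕ} (hnj : n - j + 1 < k) :
      (fun a => bellPartial n j (h a)) =O[l] fun _ => (1 : ℝ) :=
    isBigO_bellPartial fun m hm => by
      have := mem_Icc.1 hm
      exact ih m (by omega) (mem_Icc.2 (by omega))
  have hlead : (fun a => g a 1 * h a k) =O[l] fun _ => (1 : ℝ) := by
    have hsolve (a : ι) := eq_sub_of_add_eq (expansionCoeff_eq_add hk₁ (g a) (h a)).symm
    simp only [hsolve]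
    refine (hexp k hk).sub (.add (.add (.fun_sum fun j hj => ?_) (.fun_sum fun i hi => ?_)) ?_)
    · have := mem_Icc.1 hj
      exact isBigO_one_mul (hg j (by omega)) (hbell (by omega))
    · refine .const_mul_left (.fun_sum fun j hj => ?_) _
      have := mem_Ico.1 hi
      have := mem_Icc.1 hj
      exact isBigO_one_mul (hg _ (by omega)) (hbell (by omega))
    · exact (hg _ (by omega)).const_mul_left _
  simpa only [one_mul] using (hg₁.mul (isBigO_refl (fun a => h a k) l)).trans hlead

lemma isBigO_eval_truncatedEGF (hh : ∀ m ∈ Icc 1 K, (fun a => h a m) =O[l] fun _ => (1 : ℝ))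
    (ht : t =O[l] fun _ => (1 : ℝ)) : (fun a => (truncatedEGF K (h a)).eval (t a)) =O[l] t := by
  simpa [coeff_truncatedEGF] using isBigO_eval_sub_sum_coeff
    (fun a => natDegree_truncatedEGF_le K (h a)) (isBigO_coeff_truncatedEGF hh) ht 1

lemma isBigO_sum_sub_sum_expansionCoeff
    (hg : ∀ i ≤ 2 * K, (fun a => g a i) =O[l] fun _ => (1 : ℝ))
    (hh : ∀ m ∈ Icc 1 K, (fun a => h a m) =O[l] fun _ => (1 : ℝ))
    (ht : t =O[l] fun _ => (1 : ℝ)) :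
    (fun a => ∑ i ∈ range (K + 1), (-t a) ^ i / i ! * ∑ j ∈ range (K + 1 - i),
        g a (2 * i + j) * ((truncatedEGF K (h a)).eval (t a) ^ j / j !) -
      ∑ k ∈ range (K + 1), t a ^ k / k ! * expansionCoeff (g a) (h a) k) =O[l]
      fun a => t a ^ (K + 1) := by
  simp only [sum_pow_mul_expansionCoeff, ← sum_sub_distrib, mul_sum]
  refine .fun_sum fun i hi => .fun_sum fun j hj => ?_
  have hi := mem_range.1 hi
  have hj := mem_range.1 hj
  have hdegree (a : ι) : (truncatedEGF K (h a) ^ j).natDegree ≤ j * K :=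
    natDegree_pow_le_of_le j (natDegree_truncatedEGF_le K (h a))
  have htail := isBigO_eval_sub_sum_coeff hdegree
    (isBigO_coeff_pow (isBigO_coeff_truncatedEGF hh) j) ht (K + 1 - i)
  have hpow : (fun a => (-t a) ^ i) =O[l] fun a => t a ^ i := (isBigO_refl t l).neg_left.pow i
  have h := ((hpow.mul (hg (2 * i + j) (by omega))).mul htail).const_mul_left ((i ! * j ! : ℝ)⁻¹)
  simp only [mul_one, ← pow_add, Nat.add_sub_cancel' hi.le] at h
  refine h.congr_left fun a => ?_
  simp only [eval_pow, ← mul_sum]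
  field_simp

lemma isBigO_sum_iteratedDeriv_add_sub_taylor {G : ι → ℝ → ℝ} {L : ℝ}
    (hG : ∀ a, ContDiff ℝ (2 * K + 1 : ℕ) (G a))
    (hL : ∀ a, ∀ k ≤ 2 * K + 1, ∀ x, |iteratedDeriv k (G a) x| ≤ L) (y : ι → ℝ) {δ : ι → ℝ}
    (hδ : δ =O[l] t) :
    (fun a => ∑ i ∈ range (K + 1), (-t a) ^ i / i ! * (iteratedDeriv (2 * i) (G a) (y a + δ a) -
      ∑ j ∈ range (K + 1 - i), iteratedDeriv (2 * i + j) (G a) (y a) * (δ a ^ j / j !))) =O[l]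
      fun a => t a ^ (K + 1) := by
  refine .fun_sum fun i hi => ?_
  have hi : i < K + 1 := mem_range.1 hi
  have hremainder : (fun a => iteratedDeriv (2 * i) (G a) (y a + δ a) -
      ∑ j ∈ range (K + 1 - i), iteratedDeriv (2 * i + j) (G a) (y a) * (δ a ^ j / j !)) =O[l]
      fun a => t a ^ (K + 1 - i) := by
    refine .trans (.of_bound (L / (K + 1 - i)!) (.of_forall fun a => ?_)) (hδ.pow (K + 1 - i))
    have h := abs_sub_taylor_le (f := iteratedDeriv (2 * i) (G a)) (L := L) (n := K + 1 - i)
      (contDiff_iteratedDeriv _ _ ((hG a).of_le (by norm_cast; omega)))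
      (fun x => by rw [iteratedDeriv_iteratedDeriv]; exact hL a _ (by omega) x) (y a) (δ a)
    simpa only [iteratedDeriv_iteratedDeriv, Real.norm_eq_abs, abs_pow, div_mul_eq_mul_div] using h
  have hpow : (fun a => (-t a) ^ i / i !) =O[l] fun a => t a ^ i := by
    simpa only [div_eq_inv_mul] using ((isBigO_refl t l).neg_left.pow i).const_mul_left _
  simpa only [← pow_add, Nat.add_sub_cancel' hi.le] using hpow.mul hremainder

theorem isBigO_comp_denoiser_sub_gaussianSmoothing {F : ι → ℝ → ℝ} {σ y : ι → ℝ} {L : ℝ}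
    (hσ : (fun a => σ a ^ 2 / 2) =O[l] fun _ => (1 : ℝ))
    (hF : ∀ a, ContDiff ℝ (2 * (K + 1) : ℕ) (F a))
    (hL : ∀ a, ∀ k ≤ 2 * (K + 1), ∀ x, |iteratedDeriv k (F a) x| ≤ L)
    (hq : (fun _ => (1 : ℝ)) =O[l] fun a => iteratedDeriv 1 (gaussianSmoothing (σ a) (F a)) (y a))
    (hexp : ∀ a, ∀ k ∈ Icc 1 K, expansionCoeff
      (fun i => iteratedDeriv i (gaussianSmoothing (σ a) (F a)) (y a)) (h a) k = 0) :
    (fun a => F a (y a + ∑ k ∈ Icc 1 K, (σ a ^ 2 / 2) ^ k / k ! * h a k) -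
      gaussianSmoothing (σ a) (F a) (y a)) =O[l] fun a => (σ a ^ 2 / 2) ^ (K + 1) := by
  set t : ι → ℝ := fun a => σ a ^ 2 / 2
  set G : ι → ℝ → ℝ := fun a => gaussianSmoothing (σ a) (F a)
  set δ : ι → ℝ := fun a => (truncatedEGF K (h a)).eval (t a)
  have hG_bound (a : ι) : ∀ k ≤ 2 * (K + 1), ∀ x, |iteratedDeriv k (G a) x| ≤ L := by
    intro k hk
    rw [iteratedDeriv_gaussianSmoothing (σ a) (hF a) (hL a) hk]
    exact abs_gaussianSmoothing_le (σ a) (hL a k hk)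
  have hg : ∀ i ≤ 2 * K, (fun a => iteratedDeriv i (G a) (y a)) =O[l] fun _ => (1 : ℝ) :=
    fun i hi => .of_bound L (.of_forall fun a => by simpa using hG_bound a i (by omega) (y a))
  have hh : ∀ k ∈ Icc 1 K, (fun a => h a k) =O[l] fun _ => (1 : ℝ) :=
    isBigO_of_isBigO_expansionCoeff hg hq fun k hk =>
      .of_norm_eventuallyLE (.of_forall fun a => by simp [G, hexp a k hk])
  have hinversion : (fun a => F a (y a + δ a) - ∑ i ∈ range (K + 1),
      (-t a) ^ i / i ! * iteratedDeriv (2 * i) (G a) (y a + δ a)) =O[l] fun a => t a ^ (K + 1) := by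
    refine .of_bound (L * 2 ^ (K + 1) / (K + 1)!) (.of_forall fun a => ?_)
    refine (abs_sub_sum_iteratedDeriv_gaussianSmoothing_le (σ a) (hF a) (hL a) _).trans_eq ?_
    rw [Real.norm_of_nonneg (by positivity), div_pow]
    field_simp
  have htaylor := isBigO_sum_iteratedDeriv_add_sub_taylor (K := K)
    (fun a => (contDiff_gaussianSmoothing (σ a) (hF a) (hL a)).of_le (by norm_cast; omega))
    (fun a k hk => hG_bound a k (by omega)) y (isBigO_eval_truncatedEGF hh hσ)
  have hformal := isBigO_sum_sub_sum_expansionCoeff hg hh hσ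
  refine ((hinversion.add htaylor).add hformal).congr_left fun a => ?_
  simp only [mul_sub, sum_sub_distrib]
  rw [sum_pow_mul_expansionCoeff_of_eq_zero (hexp a), iteratedDeriv_zero, ← eval_truncatedEGF]
  ring

end Asymptotics

/-- The data of a denoising problem of order `K` at the point `y`: a noise level `σ` with
`η = σ² / 2 ≤ 1`, a function `F` with derivatives bounded by `L`, and a solution `h` of the
recursion. These data form a type so that `=O[⊤]` over it expresses a bound whose constant depends
only on `K`, `L` and `q`. -/
structure DenoisingProblem (K : ℕ) (L q : ℝ) where
  σ : ℝ
  F : ℝ → ℝ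
  y : ℝ
  h : ℕ → ℝ
  noise_le_one : σ ^ 2 / 2 ≤ 1
  contDiff : ContDiff ℝ (2 * (K + 1) : ℕ) F
  abs_iteratedDeriv_le : ∀ k ≤ 2 * (K + 1), ∀ x, |iteratedDeriv k F x| ≤ L
  iteratedDeriv_one_eq : iteratedDeriv 1 (gaussianSmoothing σ F) y = q
  expansionCoeff_eq_zero : ∀ k ∈ Icc 1 K,
    expansionCoeff (fun i => iteratedDeriv i (gaussianSmoothing σ F) y) h k = 0

lemma DenoisingProblem.exists_abs_sub_le (K : ℕ) (L : ℝ) {q : ℝ} (hq : q ≠ 0) :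
    ∃ C : ℝ, ∀ p : DenoisingProblem K L q,
      |p.F (p.y + ∑ k ∈ Icc 1 K, (p.σ ^ 2 / 2) ^ k / k ! * p.h k) -
        gaussianSmoothing p.σ p.F p.y| ≤ C * (p.σ ^ 2 / 2) ^ (K + 1) := by
  have hσ : (fun p : DenoisingProblem K L q => p.σ ^ 2 / 2) =O[⊤] fun _ => (1 : ℝ) :=
    isBigO_top.2 ⟨1, fun p => by
      simpa [abs_of_nonneg (show 0 ≤ p.σ ^ 2 / 2 by positivity)] using p.noise_le_one⟩
  have hq' : (fun _ => (1 : ℝ)) =O[⊤]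
      fun p : DenoisingProblem K L q => iteratedDeriv 1 (gaussianSmoothing p.σ p.F) p.y := by
    simpa only [iteratedDeriv_one_eq] using isBigO_const_const (1 : ℝ) hq ⊤
  obtain ⟨C, hC⟩ := isBigO_top.1 (isBigO_comp_denoiser_sub_gaussianSmoothing hσ
    contDiff abs_iteratedDeriv_le hq' expansionCoeff_eq_zero)
  refine ⟨C, fun p => (hC p).trans_eq ?_⟩
  rw [Real.norm_of_nonneg (by positivity)]

theorem finite_order_G_denoiser_accuracy_general (K : ℕ) (L : ℝ) {q : ℝ} (hq : q ≠ 0) :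
    ∃ C : ℝ, ∀ (σ : ℝ) (F : ℝ → ℝ), ContDiff ℝ (2 * K + 2) F →
      (∀ k ≤ 2 * K + 2, ∀ x, |iteratedDeriv k F x| ≤ L) →
      ∀ y, iteratedDeriv 1 (gaussianSmoothing σ F) y = q →
      ∀ h : ℕ → ℝ, (∀ k, 1 ≤ k → k ≤ K →
        expansionCoeff (fun i => iteratedDeriv i (gaussianSmoothing σ F) y) h k = 0) →
      |F (y + ∑ k ∈ Icc 1 K, (σ ^ 2 / 2) ^ k / k ! * h k) - gaussianSmoothing σ F y| ≤
        C * (σ ^ 2 / 2) ^ (K + 1) := by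
  obtain ⟨C, hC⟩ := DenoisingProblem.exists_abs_sub_le K L hq
  refine ⟨max C (2 * L), fun σ F hF hL y hy h hrec => ?_⟩
  rcases le_total (σ ^ 2 / 2) 1 with hη | hη
  · refine (hC ⟨σ, F, y, h, hη, mod_cast hF, hL, hy, fun k hk => ?_⟩).trans
      (mul_le_mul_of_nonneg_right (le_max_left _ _) (by positivity))
    exact hrec k (mem_Icc.1 hk).1 (mem_Icc.1 hk).2
  · have hF₀ : ∀ x, |F x| ≤ L := hL 0 (Nat.zero_le _)
    have hL₀ : 0 ≤ L := (abs_nonneg _).trans (hF₀ y)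
    calc _ ≤ L + L := (abs_sub _ _).trans (add_le_add (hF₀ _) (abs_gaussianSmoothing_le σ hF₀ y))
      _ = 2 * L * 1 := by ring
      _ ≤ max C (2 * L) * (σ ^ 2 / 2) ^ (K + 1) := by
        gcongr
        exacts [le_max_right _ _, one_le_pow₀ hη]

/-- **Pointwise accuracy of the `K`-th order agnostic (G-expansion) denoiser.**
Fix `K ≥ 1`, `L > 0` and a value `qy > 0`.  There is a constant `C` depending only on
`K, L, qy` such that, in the additive Gaussian model `Y = X + σZ` with `0 < η = σ²/2 ≤ 1/2`
and cdfs `F, G` that are `(2K+2)`-times continuously differentiable with all derivatives up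
to order `2K+2` bounded by `L`, for any point `y` with `q(y) = G^{(1)}(y) = qy > 0` and any
`h₁, …, h_K` solving the Bell-polynomial recursion at `y`, the `K`-th order denoiser
`T_K(y) = y + Σ_{k=1}^K (η^k/k!) h_k(y)` satisfies `|F(T_K(y)) − G(y)| ≤ C η^{K+1}`. -/
theorem finite_order_G_denoiser_accuracy
    (K : ℕ) (hK : 1 ≤ K) (L qy : ℝ) (hL : 0 < L) (hqy : 0 < qy) :
    ∃ C : ℝ,
      ∀ (Ω : Type) [MeasureSpace Ω] [IsProbabilityMeasure (ℙ : Measure Ω)]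
        (X Z : Ω → ℝ), Measurable X → Measurable Z →
        Measure.map Z ℙ = gaussianReal 0 1 → IndepFun X Z ℙ →
        ∀ σ η : ℝ, 0 < η → η ≤ 1 / 2 → η = σ ^ 2 / 2 →
        ∀ Y : Ω → ℝ, (∀ ω, Y ω = X ω + σ * Z ω) →
        ∀ F G : ℝ → ℝ,
          (∀ x, F x = (Measure.map X ℙ (Set.Iic x)).toReal) →
          (∀ x, G x = (Measure.map Y ℙ (Set.Iic x)).toReal) →
          ContDiff ℝ (2 * K + 2) F → ContDiff ℝ (2 * K + 2) G →
          (∀ k ≤ 2 * K + 2, ∀ x : ℝ, |iteratedDeriv k F x| ≤ L ∧ |iteratedDeriv k G x| ≤ L) →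
        ∀ y : ℝ, iteratedDeriv 1 G y = qy →
        ∀ h : ℕ → ℝ,
          (∀ k, 1 ≤ k → k ≤ K →
            (∑ l ∈ Finset.range k, (-1 : ℝ) ^ l * (k.choose l : ℝ) *
                ∑ j ∈ Finset.Icc 1 (k - l),
                  iteratedDeriv (2 * l + j) G y * bellPartial (k - l) j (fun m => h m))
              + (-1 : ℝ) ^ k * iteratedDeriv (2 * k) G y = 0) →
          |F (y + ∑ k ∈ Finset.Icc 1 K, η ^ k / (k.factorial : ℝ) * h k) - G y|
            ≤ C * η ^ (K + 1) := by
  obtain ⟨C, hC⟩ := finite_order_G_denoiser_accuracy_general K L hqy.ne'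
  refine ⟨C, fun Ω _ _ X Z hX hZ hlaw hXZ σ η _ _ hη Y hY F G hF hG hFsmooth _ hL y hy h hrec => ?_⟩
  obtain rfl : G = gaussianSmoothing σ F := by
    ext x
    rw [hG, funext hY, funext hF]
    exact toReal_map_add_mul_Iic_eq_gaussianSmoothing hX hZ hlaw hXZ σ x
  subst hη
  refine hC σ F hFsmooth (fun k hk x => (hL k hk x).1) y hy h fun k hk₁ hkK => ?_
  rw [expansionCoeff_eq]
  exact hrec k hk₁ hkK
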